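/- arXiv:2301.08185 — 2 statements merged into one kernel-verified Lean document; each statement's English description precedes it below -/
import Mathlib

section
/- (q-Pascal identity, first form) For every rational number α and every integer k ≥ 1, binom(α,k)_q = q^k·binom(α−1,k)_q + binom(α−1,k−1)_q in ℚ(q). -/
/-! The key fact is the shift rule `[α+1]_q = 1 + q[α]_q` for every rational `α`. For `α > 1` it
holds because adding `1` to `α` only increases the first coefficient `a₁` of the even-length
expansion by one, and `[a+1]_q = 1 + q[a]_q`, `q^{a+1} = q·q^a`; for `α ≤ 1` it follows because the
definition descends from a translate of `α` that is larger than `1`. Iterating gives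
`[α]_q = [k]_q + q^k[α-k]_q`. Both products in the Pascal identity share the factor
`[α-1]_q ⋯ [α-k+1]_q / [k]_q!`, and after cancelling it (`[k]_q ≠ 0`) this relation is what
remains. -/

noncomputable section

open Finset

/-- The `q`-integer `[n]_q = 1 + q + ⋯ + q^{n-1}` as a rational function in `q`. -/
def qNum (n : ℕ) : RatFunc ℚ := ∑ i ∈ Finset.range n, RatFunc.X ^ i

/-- The `q⁻¹`-integer `[n]_{q⁻¹} = 1 + q⁻¹ + ⋯ + q^{-(n-1)}`. -/
def qNumInv (n : ℕ) : RatFunc ℚ := ∑ i ∈ Finset.range n, (RatFunc.X)⁻¹ ^ i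

/-- The continued fraction expansion of `p/q` computed by the Euclidean algorithm. -/
def cfNat (p q : ℕ) : List ℕ :=
  if h : q = 0 then [] else (p / q) :: cfNat q (p % q)
termination_by q
decreasing_by exact Nat.mod_lt _ (Nat.pos_of_ne_zero h)

/-- Turn a continued fraction expansion into one of even length,
replacing a final coefficient `aₙ` by `aₙ - 1, 1` if needed. -/
def evenize (l : List ℕ) : List ℕ :=
  if l.length % 2 = 0 then l else l.dropLast ++ [l.getLast! - 1, 1]

/-- Evaluation of the Morier-Genoud--Ovsienko `q`-deformed continued fraction
`[a₁]_q + q^{a₁}/([a₂]_{q⁻¹} + q^{-a₂}/([a₃]_q + ⋯ + q^{a_{2m-1}}/[a_{2m}]_{q⁻¹}))`.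
The boolean records whether the current position is odd (`true`) or even (`false`).
(The empty continued fraction is sent to `0`; since division by zero yields `0`
in `RatFunc ℚ`, a final term `[a]_{q⁻¹} + q^{-a}/0⁻ = [a]_{q⁻¹}` comes out correctly.) -/
def qCF : Bool → List ℕ → RatFunc ℚ
  | _, [] => 0
  | true, a :: l => qNum a + RatFunc.X ^ a / qCF false l
  | false, a :: l => qNumInv a + (RatFunc.X)⁻¹ ^ a / qCF true l

/-- The Morier-Genoud--Ovsienko `q`-rational of `α > 1`, via the even-length
continued fraction expansion of `α`. -/
def qRatCF (α : ℚ) : RatFunc ℚ := qCF true (evenize (cfNat α.num.toNat α.den))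

/-- The Morier-Genoud--Ovsienko `q`-rational `[α]_q ∈ ℚ(q)`, for all `α ∈ ℚ`:
for `α > 1` it is given by the `q`-deformed continued fraction, and it is
extended to all of `ℚ` by the rule `[α-1]_q = ([α]_q - 1)/q`. -/
def qRat (α : ℚ) : RatFunc ℚ :=
  if 1 < α then qRatCF α
  else (qRatCF (α + (2 - ⌊α⌋).toNat) - qNum (2 - ⌊α⌋).toNat) / RatFunc.X ^ (2 - ⌊α⌋).toNat

/-- `{α}_q := [α+1]_q - [α]_q`, the substitute for `q^α`. -/
def qPow (α : ℚ) : RatFunc ℚ := qRat (α + 1) - qRat α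

/-- The `q`-factorial `[k]_q!`. -/
def qFact (k : ℕ) : RatFunc ℚ := ∏ i ∈ Finset.range k, qNum (i + 1)

/-- The `q`-binomial coefficient `binom(α,k)_q = [α]_q [α-1]_q ⋯ [α-k+1]_q / [k]_q!`. -/
def qBinom (α : ℚ) (k : ℕ) : RatFunc ℚ :=
  (∏ i ∈ Finset.range k, qRat (α - i)) / qFact k

/-- The Laurent-series expansion (at `q = 0`) of a rational function. -/
def lau (f : RatFunc ℚ) : LaurentSeries ℚ := ↑f

lemma qNum_succ (n : ℕ) : qNum (n + 1) = 1 + RatFunc.X * qNum n := by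
  unfold qNum
  rw [Finset.sum_range_succ', Finset.mul_sum, add_comm, pow_zero]
  congr 1
  exact Finset.sum_congr rfl fun i _ => by rw [pow_succ']

lemma qNum_ne_zero (n : ℕ) : qNum (n + 1) ≠ 0 := by
  have h : qNum (n + 1) = algebraMap (Polynomial ℚ) (RatFunc ℚ)
      (∑ i ∈ Finset.range (n + 1), Polynomial.X ^ i) := by
    simp [qNum, RatFunc.algebraMap_X]
  rw [h]
  intro h0
  have h1 := (map_eq_zero_iff _ (RatFunc.algebraMap_injective ℚ)).mp h0
  have h2 := congrArg (Polynomial.eval 1) h1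
  simp [Polynomial.eval_finsetSum] at h2
  have : (0 : ℚ) ≤ n := n.cast_nonneg
  linarith

/-- Increasing the first coefficient `a ≥ 1` commutes with `evenize`; positivity is needed because
`[a]` is rewritten as `[a - 1, 1]`. -/
lemma qCF_evenize_succ (a : ℕ) (ha : 1 ≤ a) (l : List ℕ) :
    qCF true (evenize ((a + 1) :: l)) = 1 + RatFunc.X * qCF true (evenize (a :: l)) := by
  have key : ∀ (b : ℕ) (m : List ℕ),
      qCF true ((b + 1) :: m) = 1 + RatFunc.X * qCF true (b :: m) := by
    intro b m
    simp only [qCF, qNum_succ]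
    ring
  cases l with
  | nil =>
    obtain ⟨b, rfl⟩ : ∃ b, a = b + 1 := ⟨a - 1, by omega⟩
    simpa [evenize] using key b [1]
  | cons c l =>
    unfold evenize
    have hlast : (((a + 1) :: c :: l).getLast! : ℕ) = (a :: c :: l).getLast! := by
      simp [List.getLast!_eq_getLast?_getD]
    rw [hlast]
    simp only [List.length_cons, List.dropLast_cons_cons, List.cons_append]
    split_ifs <;> exact key _ _

lemma cfNat_eq (p q : ℕ) (hq : q ≠ 0) : cfNat p q = (p / q) :: cfNat q (p % q) := by
  rw [cfNat, dif_neg hq]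

lemma qRatCF_add_one (α : ℚ) (h : 1 < α) :
    qRatCF (α + 1) = 1 + RatFunc.X * qRatCF α := by
  have hden : (α + 1).den = α.den := by
    simpa only [Int.cast_one] using Rat.add_intCast_den α 1
  have hnum : (α + 1).num = α.num + α.den := by
    have h1 := Rat.mul_den_eq_num (α + 1)
    rw [hden, add_mul, Rat.mul_den_eq_num, one_mul] at h1
    exact_mod_cast h1.symm
  have hlt : (α.den : ℤ) < α.num := by
    have h1 := Rat.num_div_den α
    have hd : (0 : ℚ) < α.den := by exact_mod_cast α.den_pos
    rw [← h1, lt_div_iff₀ hd, one_mul] at h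
    exact_mod_cast h
  have htn : (α.num + (α.den : ℤ)).toNat = α.num.toNat + α.den := by omega
  have hle : α.den ≤ α.num.toNat := by omega
  unfold qRatCF
  rw [hnum, hden, htn, cfNat_eq _ _ α.den_ne_zero, cfNat_eq _ _ α.den_ne_zero,
    Nat.add_div_right _ α.den_pos, Nat.add_mod_right]
  exact qCF_evenize_succ _ (Nat.div_pos hle α.den_pos) _

lemma qRat_add_one (α : ℚ) : qRat (α + 1) = 1 + RatFunc.X * qRat α := by
  have hX : (RatFunc.X : RatFunc ℚ) ≠ 0 := RatFunc.X_ne_zero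
  by_cases h1 : 1 < α
  · rw [qRat, qRat, if_pos (by linarith), if_pos h1, qRatCF_add_one α h1]
  -- With `n + 1 = 2 - ⌊α⌋`, both sides are expressed through the same value at `α + 1 + n ≥ 2`.
  obtain ⟨n, hn⟩ : ∃ n : ℕ, (2 - ⌊α⌋).toNat = n + 1 := by
    have : ⌊α⌋ ≤ 1 := by
      have : (⌊α⌋ : ℚ) ≤ 1 := (Int.floor_le α).trans (not_lt.mp h1)
      exact_mod_cast this
    exact ⟨(1 - ⌊α⌋).toNat, by omega⟩
  have hα : qRat α = (qRatCF (α + 1 + n) - qNum (n + 1)) / RatFunc.X ^ (n + 1) := by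
    rw [qRat, if_neg h1, hn]
    push_cast
    rw [show α + ((n : ℚ) + 1) = α + 1 + n by ring]
  -- For `α + 1 > 1` the descent is undone step by step through the shift rule above `1`.
  have hshift : ∀ (β : ℚ), 1 < β → ∀ m : ℕ,
      qRatCF (β + m) = qNum m + RatFunc.X ^ m * qRatCF β := by
    intro β hβ m
    induction m with
    | zero => simp [qNum]
    | succ m ih =>
      have hm : (0 : ℚ) ≤ m := m.cast_nonneg
      push_cast
      rw [← add_assoc, qRatCF_add_one _ (by linarith), ih, qNum_succ]
      ring
  have hα1 : qRat (α + 1) = (qRatCF (α + 1 + n) - qNum n) / RatFunc.X ^ n := by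
    by_cases h2 : 1 < α + 1
    · rw [qRat, if_pos h2, hshift _ h2]
      field_simp
      ring
    · rw [qRat, if_neg h2, Int.floor_add_one, show (2 - (⌊α⌋ + 1)).toNat = n by omega]
  have hn' : qNum (n + 1) = qNum n + RatFunc.X ^ n := Finset.sum_range_succ _ _
  rw [hα1, hα, hn']
  field_simp
  ring

lemma qRat_eq_shift (k : ℕ) (α : ℚ) :
    qRat α = qNum k + RatFunc.X ^ k * qRat (α - k) := by
  induction k generalizing α with
  | zero => simp [qNum]
  | succ k ih =>
    have h := qRat_add_one (α - 1)
    rw [sub_add_cancel] at h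
    rw [h, ih (α - 1), qNum_succ]
    push_cast
    rw [show α - 1 - (k : ℚ) = α - (k + 1) by ring]
    ring

/-- The `q`-Pascal identity, first form:
`binom(α,k)_q = q^k·binom(α-1,k)_q + binom(α-1,k-1)_q`. -/
theorem qBinom_pascal_one (α : ℚ) (k : ℕ) (hk : 1 ≤ k) :
    qBinom α k = RatFunc.X ^ k * qBinom (α - 1) k + qBinom (α - 1) (k - 1) := by
  obtain ⟨m, rfl⟩ : ∃ m, k = m + 1 := ⟨k - 1, by omega⟩
  have h := qRat_eq_shift (m + 1) α
  have hprod : ∏ i ∈ Finset.range m, qRat (α - (i + 1 : ℕ))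
      = ∏ i ∈ Finset.range m, qRat (α - 1 - i) :=
    Finset.prod_congr rfl fun i _ => by push_cast; rw [show α - ((i : ℚ) + 1) = α - 1 - i by ring]
  have hF : qFact m ≠ 0 := Finset.prod_ne_zero_iff.mpr fun i _ => qNum_ne_zero i
  have hN := qNum_ne_zero m
  have hFs : qFact (m + 1) = qFact m * qNum (m + 1) := Finset.prod_range_succ _ _
  have hlast : α - 1 - (m : ℚ) = α - (m + 1 : ℕ) := by push_cast; ring
  simp only [qBinom, Nat.add_sub_cancel, hFs]
  rw [Finset.prod_range_succ', hprod, Finset.prod_range_succ, hlast, Nat.cast_zero, sub_zero, h]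
  field_simp
  ring

end
end

section
/- Let α ∈ ℚ with α not a nonnegative integer, let k ≥ 0 be an integer, let N = ⌊α⌋, let β = α − N, and let b = ord([β]_q). Then the order of the Laurent expansion of binom(α,k)_q is: 0 if k ≤ N; b − (k−N)(k−N−1)/2 if N ≥ 0 and k > N; and N·k − k(k−1)/2 if N < 0. -/
/-! The proof computes the order at `q = 0` of every factor of the `q`-binomial coefficient.

For an even-length expansion `α = [a₁, a₂, …]` of a rational `α > 1`, one has
`[α]_q = [N]_q + q^N B` with `N = ⌊α⌋` and `B = 1 / ([a₂]_{q⁻¹} + ⋯)`. All partial quotients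
are positive, and induction along the list shows that the odd-position tails have order `0` while the
even-position tails, such as the denominator of `B`, have order `-c` with `c ≥ 0`, where `c ≥ 1` unless
the tail is the single quotient `1`, which does not happen for an expansion of a number in
`(0, 1)` (`hasOrd_qCF`). Hence `B` vanishes or has positive order (`qRatCF_eq`), and the shift rule
gives: `[α]_q` has order `0` if `⌊α⌋ ≥ 1`, and order `⌊α⌋` if `⌊α⌋ < 0` (because `[α]_q` is then
`q^{-n} (B - [n]_q)` with `n = -⌊α⌋`). For `0 < α < 1` it has some finite order, which is `b`.

Every `[n]_q` with `n ≥ 1` has order `0`, so the `q`-factorial contributes nothing, and the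
order of the `q`-binomial coefficient is the sum of the orders of the factors `[α - i]_q`:
zeros for `i < N`, then `b` for `i = N`, then `-1, -2, …` for `i > N`. -/

noncomputable section

open Finset

/-! ### Orders of Laurent expansions -/

/-- The Laurent expansion of `f` at `q = 0` has order exactly `n`; in particular `f ≠ 0`. -/
def HasOrd (f : RatFunc ℚ) (n : ℤ) : Prop := (lau f).orderTop = (n : WithTop ℤ)

theorem lau_add (f g : RatFunc ℚ) : lau (f + g) = lau f + lau g := map_add _ _ _
theorem lau_mul (f g : RatFunc ℚ) : lau (f * g) = lau f * lau g := map_mul _ _ _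
theorem lau_neg (f : RatFunc ℚ) : lau (-f) = -lau f := map_neg _ _

theorem HasOrd.ne_zero {f : RatFunc ℚ} {n : ℤ} (h : HasOrd f n) : f ≠ 0 := by
  rintro rfl
  simp [HasOrd, lau] at h

theorem hasOrd_of_ne_zero {f : RatFunc ℚ} (h : f ≠ 0) : HasOrd f (lau f).order := by
  have h' : lau f ≠ 0 := by simpa [lau] using h
  exact (HahnSeries.order_eq_orderTop_of_ne_zero h').symm

theorem HasOrd.order_eq {f : RatFunc ℚ} {n : ℤ} (h : HasOrd f n) : (lau f).order = n := by
  have h1 := hasOrd_of_ne_zero h.ne_zero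
  unfold HasOrd at h h1
  rw [h] at h1
  exact_mod_cast h1.symm

theorem HasOrd.mul {f g : RatFunc ℚ} {m n : ℤ} (hf : HasOrd f m) (hg : HasOrd g n) :
    HasOrd (f * g) (m + n) := by
  unfold HasOrd at *
  rw [lau_mul, HahnSeries.orderTop_mul, hf, hg]
  rfl

theorem HasOrd.neg {f : RatFunc ℚ} {m : ℤ} (hf : HasOrd f m) : HasOrd (-f) m := by
  unfold HasOrd at *
  rw [lau_neg, HahnSeries.orderTop_neg, hf]

theorem hasOrd_one : HasOrd 1 0 := by
  simp [HasOrd, lau]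

theorem hasOrd_X : HasOrd RatFunc.X 1 := by
  unfold HasOrd lau
  rw [RatFunc.coe_X, HahnSeries.orderTop_single one_ne_zero]

theorem HasOrd.inv {f : RatFunc ℚ} {m : ℤ} (hf : HasOrd f m) : HasOrd f⁻¹ (-m) := by
  have h1 := hasOrd_of_ne_zero (inv_ne_zero hf.ne_zero)
  have h2 := hf.mul h1
  rw [mul_inv_cancel₀ hf.ne_zero] at h2
  have h3 := h2.order_eq
  rw [hasOrd_one.order_eq] at h3
  rwa [show -m = (lau f⁻¹).order by omega]

theorem HasOrd.div {f g : RatFunc ℚ} {m n : ℤ} (hf : HasOrd f m) (hg : HasOrd g n) :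
    HasOrd (f / g) (m - n) := by
  rw [div_eq_mul_inv, sub_eq_add_neg]
  exact hf.mul hg.inv

theorem HasOrd.pow {f : RatFunc ℚ} {m : ℤ} (hf : HasOrd f m) (n : ℕ) :
    HasOrd (f ^ n) (n * m) := by
  induction n with
  | zero => simpa using hasOrd_one
  | succ n ih =>
    rw [pow_succ, show ((n + 1 : ℕ) : ℤ) * m = n * m + m by push_cast; ring]
    exact ih.mul hf

theorem HasOrd.add {f g : RatFunc ℚ} {m n : ℤ} (hf : HasOrd f m) (hg : HasOrd g n)
    (h : m < n) : HasOrd (f + g) m := by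
  unfold HasOrd at *
  rw [lau_add, HahnSeries.orderTop_add_eq_left, hf]
  rw [hf, hg]
  exact_mod_cast h

theorem hasOrd_X_pow (n : ℕ) : HasOrd (RatFunc.X ^ n) n := by
  simpa using hasOrd_X.pow n

theorem hasOrd_X_inv_pow (n : ℕ) : HasOrd ((RatFunc.X)⁻¹ ^ n) (-n) := by
  simpa using hasOrd_X.inv.pow n

theorem HasOrd.prod {f : ℕ → RatFunc ℚ} {e : ℕ → ℤ} (k : ℕ) (h : ∀ i, HasOrd (f i) (e i)) :
    HasOrd (∏ i ∈ Finset.range k, f i) (∑ i ∈ Finset.range k, e i) := by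
  induction k with
  | zero => simpa using hasOrd_one
  | succ k ih =>
    rw [Finset.prod_range_succ, Finset.sum_range_succ]
    exact ih.mul (h k)

/-! ### `q`-integers -/

theorem qNum_add (m n : ℕ) : qNum (m + n) = qNum m + RatFunc.X ^ m * qNum n := by
  simp only [qNum, Finset.sum_range_add, Finset.mul_sum, pow_add]

theorem qNum_one : qNum 1 = 1 := by simp [qNum]

theorem hasOrd_qNum (n : ℕ) : HasOrd (qNum (n + 1)) 0 := by
  induction n with
  | zero => simpa [qNum_one] using hasOrd_one
  | succ n ih =>
    rw [add_comm, qNum_add, qNum_one]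
    exact hasOrd_one.add ((hasOrd_X_pow 1).mul ih) (by norm_num)

theorem hasOrd_qNumInv (n : ℕ) : HasOrd (qNumInv (n + 1)) (-n) := by
  induction n with
  | zero => simpa [qNumInv] using hasOrd_one
  | succ n ih =>
    rw [qNumInv, Finset.sum_range_succ, add_comm]
    exact (hasOrd_X_inv_pow (n + 1)).add ih (by push_cast; omega)

theorem hasOrd_qFact (k : ℕ) : HasOrd (qFact k) 0 := by
  simpa [qFact] using HasOrd.prod k hasOrd_qNum

/-! ### Continued fractions -/

/-- Orders of the two kinds of tails of a `q`-deformed continued fraction. The parity of the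
length plays no role. -/
theorem hasOrd_qCF (l : List ℕ) (hl : l ≠ []) (hpos : ∀ a ∈ l, 1 ≤ a) :
    HasOrd (qCF true l) 0 ∧
      ∃ c : ℤ, 0 ≤ c ∧ (l ≠ [1] → 1 ≤ c) ∧ HasOrd (qCF false l) (-c) := by
  induction l with
  | nil => exact absurd rfl hl
  | cons a l ih =>
    obtain ⟨a, rfl⟩ : ∃ b, a = b + 1 := ⟨a - 1, by have := hpos a (by simp); omega⟩
    by_cases h : l = []
    · subst h
      simp only [qCF, div_zero, add_zero]
      refine ⟨hasOrd_qNum a, a, by positivity, fun h => ?_, hasOrd_qNumInv a⟩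
      have : a ≠ 0 := by rintro rfl; simp at h
      omega
    · obtain ⟨h1, c, hc, -, h2⟩ := ih h (fun b hb => hpos b (by simp [hb]))
      simp only [qCF]
      constructor
      · exact (hasOrd_qNum a).add ((hasOrd_X_pow (a + 1)).div h2) (by push_cast; omega)
      · refine ⟨a + 1, by positivity, fun _ => by omega, ?_⟩
        rw [add_comm]
        have := ((hasOrd_X_inv_pow (a + 1)).div h1).add (hasOrd_qNumInv a) (by push_cast; omega)
        simpa using this

/-- The expansion of `d / r > 1` has positive partial quotients, the last one being at least
`2`. -/
theorem cfNat_spec (r : ℕ) : ∀ d, 0 < r → r < d →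
    ∃ l x, cfNat d r = l ++ [x] ∧ 2 ≤ x ∧ ∀ a ∈ l, 1 ≤ a := by
  induction r using Nat.strong_induction_on with
  | _ r ih =>
    intro d hr hd
    rw [cfNat, dif_neg hr.ne']
    by_cases h : d % r = 0
    · refine ⟨[], d / r, ?_, ?_, by simp⟩
      · rw [h, cfNat, dif_pos rfl]; rfl
      · obtain ⟨m, rfl⟩ := Nat.dvd_of_mod_eq_zero h
        rw [Nat.mul_div_cancel_left _ hr]
        by_contra! hm
        have : r * m ≤ r * 1 := Nat.mul_le_mul_left _ (by omega)
        omega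
    · obtain ⟨l, x, h1, h2, h3⟩ := ih (d % r) (Nat.mod_lt _ hr) r (Nat.pos_of_ne_zero h)
        (Nat.mod_lt _ hr)
      refine ⟨d / r :: l, x, by rw [h1]; rfl, h2, ?_⟩
      intro a ha
      rcases List.mem_cons.1 ha with rfl | ha
      · exact Nat.div_pos hd.le hr
      · exact h3 a ha

theorem evenize_spec (a : ℕ) (l : List ℕ) (x : ℕ) (hx : 2 ≤ x) (hl : ∀ b ∈ l, 1 ≤ b) :
    ∃ m, evenize (a :: (l ++ [x])) = a :: m ∧ m ≠ [] ∧ m ≠ [1] ∧ ∀ b ∈ m, 1 ≤ b := by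
  unfold evenize
  split_ifs with h
  · refine ⟨l ++ [x], rfl, by simp, ?_, ?_⟩
    · intro h
      have := congrArg (fun l : List ℕ => l.getLast?) h
      simp at this
      omega
    · intro b hb
      rcases List.mem_append.1 hb with hb | hb
      · exact hl b hb
      · simp at hb; omega
  · refine ⟨l ++ [x - 1, 1], ?_, by simp, ?_, ?_⟩
    · rw [← List.cons_append, List.dropLast_concat]
      simp [List.getLast?_cons]
    · intro h
      have := congrArg List.length h
      simp at this
    · intro b hb
      rcases List.mem_append.1 hb with hb | hb
      · exact hl b hb
      · simp at hb; omega

/-! ### `q`-rationals -/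

/-- The decomposition `[α]_q = [N]_q + q^N B` for `α > 1` and `N = ⌊α⌋`, in which `B` plays the
role of `[α - N]_q`. -/
theorem qRatCF_eq (α : ℚ) (hα : 1 < α) :
    ∃ B, qRatCF α = qNum ⌊α⌋.toNat + RatFunc.X ^ ⌊α⌋.toNat * B ∧
      ((B = 0 ∧ α = ⌊α⌋) ∨ ∃ b : ℤ, 1 ≤ b ∧ HasOrd B b) := by
  have hnum : 0 < α.num := Rat.num_pos.2 (by linarith)
  have hfl : ⌊α⌋.toNat = α.num.toNat / α.den := by
    rw [Rat.floor_def']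
    obtain ⟨n, hn⟩ := Int.eq_ofNat_of_zero_le hnum.le
    rw [hn]
    norm_cast
  have hN : 1 ≤ ⌊α⌋ := Int.le_floor.2 (by exact_mod_cast hα.le)
  unfold qRatCF
  rw [hfl, cfNat, dif_neg α.den_nz]
  by_cases h : α.num.toNat % α.den = 0
  · -- An integer `n` is expanded as `[n - 1, 1]`.
    have hmul := Nat.div_add_mod α.num.toNat α.den
    have hint : α = ⌊α⌋ := by
      have h1 : α.num = α.den * ⌊α⌋ := by
        have : (α.num.toNat : ℤ) = α.den * (α.num.toNat / α.den : ℕ) := by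
          exact_mod_cast (by omega : α.num.toNat = α.den * (α.num.toNat / α.den))
        rw [← hfl] at this
        rwa [Int.toNat_of_nonneg hnum.le, Int.toNat_of_nonneg (by omega)] at this
      have hd : (α.den : ℚ) ≠ 0 := by exact_mod_cast α.den_nz
      conv_lhs => rw [← Rat.num_div_den α, h1]
      push_cast
      field_simp
    refine ⟨0, ?_, Or.inl ⟨rfl, hint⟩⟩
    obtain ⟨n, hn⟩ : ∃ n, α.num.toNat / α.den = n + 1 :=
      ⟨α.num.toNat / α.den - 1, by omega⟩
    rw [h, hn, cfNat, dif_pos rfl]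
    simp [evenize, qCF, qNumInv, qNum, Finset.sum_range_succ]
  · have hd := Nat.pos_of_ne_zero α.den_nz
    obtain ⟨l, x, h1, h2, h3⟩ := cfNat_spec _ α.den (Nat.pos_of_ne_zero h) (Nat.mod_lt _ hd)
    obtain ⟨m, h4, h5, h6, h7⟩ := evenize_spec (α.num.toNat / α.den) l x h2 h3
    obtain ⟨-, c, -, hc, h8⟩ := hasOrd_qCF m h5 h7
    rw [h1, h4]
    refine ⟨(qCF false m)⁻¹, by rw [qCF, div_eq_mul_inv], Or.inr ⟨c, hc h6, ?_⟩⟩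
    simpa using h8.inv

theorem hasOrd_qRat_pos (α : ℚ) (h : 1 ≤ ⌊α⌋) : HasOrd (qRat α) 0 := by
  have h1 : (1 : ℚ) ≤ α := by exact_mod_cast Int.le_floor.1 h
  rcases h1.lt_or_eq with h1 | rfl
  · rw [qRat, if_pos h1]
    obtain ⟨B, hB, hB'⟩ := qRatCF_eq α h1
    obtain ⟨n, hn⟩ : ∃ n, ⌊α⌋.toNat = n + 1 := ⟨⌊α⌋.toNat - 1, by omega⟩
    rw [hB, hn]
    rcases hB' with ⟨rfl, -⟩ | ⟨b, hb, hB'⟩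
    · simpa using hasOrd_qNum n
    · exact (hasOrd_qNum n).add ((hasOrd_X_pow _).mul hB') (by push_cast; omega)
  · obtain ⟨B, hB, hB'⟩ := qRatCF_eq 2 (by norm_num)
    have e : (1 : ℚ) + ((2 - ⌊(1 : ℚ)⌋).toNat : ℕ) = 2 := by norm_num
    have e2 : (2 - ⌊(1 : ℚ)⌋).toNat = 1 := by norm_num
    have e3 : ⌊(2 : ℚ)⌋.toNat = 1 + 1 := by norm_num; rfl
    rw [e3, qNum_add, qNum_one] at hB
    rw [qRat, if_neg (by norm_num), e, e2, hB, qNum_one]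
    have hX : (RatFunc.X : RatFunc ℚ) ≠ 0 := RatFunc.X_ne_zero
    have e4 : (1 + RatFunc.X ^ 1 * 1 + RatFunc.X ^ (1 + 1) * B - 1) / RatFunc.X ^ 1
        = 1 + RatFunc.X * B := by
      field_simp
      ring
    rw [e4]
    rcases hB' with ⟨rfl, -⟩ | ⟨b, hb, hB'⟩
    · simpa using hasOrd_one
    · exact hasOrd_one.add (hasOrd_X.mul hB') (by omega)

/-- For `⌊α⌋ = -j ≤ 0`, the defining shift of `α` into `[2, 3)` amounts to
`[α]_q = q^{-j} (B - [j]_q)`. -/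
theorem qRat_nonpos (α : ℚ) (j : ℕ) (h : ⌊α⌋ = -j) :
    ∃ B, qRat α = (B - qNum j) / RatFunc.X ^ j ∧
      ((B = 0 ∧ α = ⌊α⌋) ∨ ∃ b : ℤ, 1 ≤ b ∧ HasOrd B b) := by
  have h1 : α < 1 := by
    have := Int.lt_floor_add_one α
    rw [h] at this
    push_cast at this
    have : (0 : ℚ) ≤ j := by positivity
    linarith
  have h2 : (2 - ⌊α⌋).toNat = 2 + j := by omega
  have h3 : ⌊α + ((2 + j : ℕ) : ℚ)⌋ = 2 := by
    rw [Int.floor_add_natCast, h]; push_cast; ring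
  have h4 : 1 < α + ((2 + j : ℕ) : ℚ) := by
    have := Int.floor_le (α + ((2 + j : ℕ) : ℚ))
    rw [h3] at this
    push_cast at this ⊢
    linarith
  obtain ⟨B, hB, hB'⟩ := qRatCF_eq _ h4
  refine ⟨B, ?_, ?_⟩
  · rw [qRat, if_neg (by linarith), h2, hB, h3, qNum_add]
    have hX : (RatFunc.X : RatFunc ℚ) ≠ 0 := RatFunc.X_ne_zero
    rw [show (2 : ℤ).toNat = 2 from rfl, pow_add]
    field_simp
    ring
  · refine hB'.imp (fun hb => ⟨hb.1, ?_⟩) id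
    have := hb.2
    rw [h3] at this
    rw [h]
    push_cast at this ⊢
    linarith

theorem hasOrd_qRat_neg (α : ℚ) (h : ⌊α⌋ < 0) : HasOrd (qRat α) ⌊α⌋ := by
  obtain ⟨j, hj⟩ : ∃ j : ℕ, ⌊α⌋ = -((j + 1 : ℕ) : ℤ) := ⟨(-⌊α⌋ - 1).toNat, by omega⟩
  obtain ⟨B, hB, hB'⟩ := qRat_nonpos α (j + 1) hj
  have key : HasOrd (B - qNum (j + 1)) 0 := by
    rw [sub_eq_neg_add]
    rcases hB' with ⟨rfl, -⟩ | ⟨b, hb, hB'⟩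
    · simpa using (hasOrd_qNum j).neg
    · exact (hasOrd_qNum j).neg.add hB' (by omega)
  rw [hB, hj, ← zero_sub]
  exact key.div (hasOrd_X_pow _)

theorem qRat_ne_zero (α : ℚ) (h : ⌊α⌋ = 0) (h0 : α ≠ 0) : qRat α ≠ 0 := by
  obtain ⟨B, hB, hB'⟩ := qRat_nonpos α 0 (by simpa using h)
  rw [hB]
  rcases hB' with ⟨-, hα⟩ | ⟨b, hb, hB'⟩
  · rw [h] at hα
    exact absurd (by simpa using hα) h0
  · simpa [qNum] using hB'.ne_zero

/-! ### Summing the orders of the factors -/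

theorem triangle_succ (x : ℤ) : (x + 1) * x / 2 = x * (x - 1) / 2 + x := by
  rw [show (x + 1) * x = x * (x - 1) + x * 2 by ring, Int.add_mul_ediv_right _ _ (by norm_num)]

theorem sum_orders (N b : ℤ) (k : ℕ) :
    ∑ i ∈ Finset.range k, (if (i : ℤ) < N then 0 else if (i : ℤ) = N then b else N - i) =
      if (k : ℤ) ≤ N then 0
      else if 0 ≤ N then b - ((k : ℤ) - N) * ((k : ℤ) - N - 1) / 2
      else N * k - (k : ℤ) * ((k : ℤ) - 1) / 2 := by
  induction k with
  | zero =>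
    rcases le_or_gt 0 N with h | h
    · simp [h]
    · simp [not_le.2 h]
  | succ k ih =>
    rw [Finset.sum_range_succ, ih]
    have e1 : ((k + 1 : ℕ) : ℤ) - N - 1 = k - N := by push_cast; ring
    have e2 : ((k + 1 : ℕ) : ℤ) - 1 = k := by push_cast; ring
    have e3 : ((k + 1 : ℕ) : ℤ) - N = (k - N) + 1 := by push_cast; ring
    rw [e1, e2, e3, triangle_succ]
    push_cast
    rw [triangle_succ, mul_add, mul_one]
    rcases lt_trichotomy (k : ℤ) N with h | h | h
    · simp [h, h.le]
    · have hN : 0 ≤ N := by omega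
      simp [← h]
    · have h1 : ¬ (k : ℤ) < N := by omega
      have h2 : ¬ (k : ℤ) = N := by omega
      have h3 : ¬ (k : ℤ) ≤ N := by omega
      have h4 : ¬ (k : ℤ) + 1 ≤ N := by omega
      simp only [h1, h2, h3, h4, if_false]
      split_ifs <;> ring

/-- The order of the Laurent expansion of `binom(α,k)_q`, for `α` not a
nonnegative integer, where `N = ⌊α⌋`, `β = α - N` and `b = ord([β]_q)`. -/
theorem order_qBinom (α : ℚ) (hα : ∀ n : ℕ, α ≠ n) (k : ℕ) :
    (lau (qBinom α k)).order =
      if (k : ℤ) ≤ ⌊α⌋ then 0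
      else if 0 ≤ ⌊α⌋ then
        (lau (qRat (α - ⌊α⌋))).order - ((k : ℤ) - ⌊α⌋) * ((k : ℤ) - ⌊α⌋ - 1) / 2
      else ⌊α⌋ * k - (k : ℤ) * ((k : ℤ) - 1) / 2 := by
  rw [← sum_orders]
  apply HasOrd.order_eq
  rw [qBinom, ← sub_zero (Finset.sum _ _)]
  refine HasOrd.div (HasOrd.prod k fun i => ?_) (hasOrd_qFact k)
  have hf : ⌊α - (i : ℚ)⌋ = ⌊α⌋ - i := Int.floor_sub_natCast α i
  split_ifs with h1 h2
  · exact hasOrd_qRat_pos _ (by omega)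
  · rw [show ((i : ℚ)) = (⌊α⌋ : ℚ) by exact_mod_cast congrArg (Int.cast : ℤ → ℚ) h2]
    refine hasOrd_of_ne_zero (qRat_ne_zero _ (by simp) fun h => hα i ?_)
    rw [sub_eq_zero] at h
    rw [h, ← h2]
    simp
  · rw [← hf]
    exact hasOrd_qRat_neg _ (by omega)

end
end
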